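/- Let γ : ℝ → ℝ be smooth with γ'(t) > 0 for all t, set Γ₁ := (γ')^{−1/2}, Γ₂ := (γ')^{−1/2}·γ, and p := Γ₁''/Γ₁. For smooth u, v : ℝ → ℝ define U := (−½u'Γ₁³, −½u'Γ₁²Γ₂ + uΓ₁) and V := (−½v'Γ₁³, −½v'Γ₁²Γ₂ + vΓ₁). Then for all t: [U'(t), V'(t)] + p(t)[U(t), V(t)] = −¼·(u''(t)v'(t) − u'(t)v''(t))/γ'(t)² − ½·d/dt( Γ₁(t)³Γ₁'(t)·(u'(t)v(t) − u(t)v'(t)) ). (Integrating over a period, this gives Ω = −¼Ω', where Ω' is the Kirillov–Kostant–Souriau form Ω'(u,v) = ∫ (u''v' − u'v'')/(γ')² dt.) -/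

import Mathlib

/-!
With `a = Γ₁`, the variation induced by `u` is `U = f Γ' - ½ f' Γ` for `f = a² u`. The Hill
equation `Γ'' = pΓ` then gives `U' = (p f - ½ f'') Γ + ½ f' Γ'`, and since `[Γ, Γ'] = 1` the
density of `Ω` becomes `p (f g' - f' g) - ¼ (f'' g' - f' g'')`, where `g = a² v`. Substituting
`f = a² u`, `g = a² v` and `p = a'' / a` turns this into `-¼ a⁴ (u'' v' - u' v'')` plus an exact
derivative, and `a⁴ = (γ')⁻²`.
-/

open Real

/-- The determinant of the 2×2 matrix with columns `u`, `v` in `ℝ²`. -/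
def det2 (u v : ℝ × ℝ) : ℝ := u.1 * v.2 - u.2 * v.1

theorem det2_smul_add_smul (x y : ℝ × ℝ) (a b c d : ℝ) :
    det2 (a • x + b • y) (c • x + d • y) = (a * d - b * c) * det2 x y := by
  simp only [det2, Prod.fst_add, Prod.snd_add, Prod.smul_fst, Prod.smul_snd, smul_eq_mul]
  ring

section Variation

variable {E : Type*} [NormedAddCommGroup E] [NormedSpace ℝ E]

/-- The variation `f Γ' - ½ f' Γ` of a curve `Γ`. In the plane, the coefficient `-½ f'` is the one
for which the variation preserves `[Γ, Γ'] = 1` to first order; it is written first because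
coordinates are taken in the frame `(Γ, Γ')`. -/
noncomputable def centroAffineVariation (Γ : ℝ → E) (f : ℝ → ℝ) (t : ℝ) : E :=
  (-(1 / 2) * deriv f t) • Γ t + f t • deriv Γ t

theorem hasDerivAt_centroAffineVariation {Γ : ℝ → E} {f : ℝ → ℝ} {p t : ℝ}
    (hΓ : DifferentiableAt ℝ Γ t) (hill : HasDerivAt (deriv Γ) (p • Γ t) t)
    (hf : DifferentiableAt ℝ f t) (hf' : DifferentiableAt ℝ (deriv f) t) :
    HasDerivAt (centroAffineVariation Γ f)
      ((p * f t - 1 / 2 * deriv (deriv f) t) • Γ t + (1 / 2 * deriv f t) • deriv Γ t) t := by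
  refine (((hf'.hasDerivAt.const_mul (-(1 / 2))).smul hΓ.hasDerivAt).add
    (hf.hasDerivAt.smul hill)).congr_deriv ?_
  module

theorem det2_deriv_add_mul_det2_centroAffineVariation {Γ : ℝ → ℝ × ℝ} {f g : ℝ → ℝ} {p t : ℝ}
    (hΓ : DifferentiableAt ℝ Γ t) (hill : HasDerivAt (deriv Γ) (p • Γ t) t)
    (hf : DifferentiableAt ℝ f t) (hf' : DifferentiableAt ℝ (deriv f) t)
    (hg : DifferentiableAt ℝ g t) (hg' : DifferentiableAt ℝ (deriv g) t) :
    det2 (deriv (centroAffineVariation Γ f) t) (deriv (centroAffineVariation Γ g) t)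
        + p * det2 (centroAffineVariation Γ f t) (centroAffineVariation Γ g t) =
      (p * (f t * deriv g t - deriv f t * g t)
        - 1 / 4 * (deriv (deriv f) t * deriv g t - deriv f t * deriv (deriv g) t))
          * det2 (Γ t) (deriv Γ t) := by
  rw [(hasDerivAt_centroAffineVariation hΓ hill hf hf').deriv,
    (hasDerivAt_centroAffineVariation hΓ hill hg hg').deriv]
  simp only [centroAffineVariation, det2_smul_add_smul]
  ring

end Variation

section SqMul

variable {a u v : ℝ → ℝ}

theorem deriv_sq_mul (ha : Differentiable ℝ a) (hu : Differentiable ℝ u) :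
    deriv (a ^ 2 * u) = fun t => 2 * a t * deriv a t * u t + a t ^ 2 * deriv u t := by
  funext t
  simpa using (((ha t).hasDerivAt.pow 2).mul (hu t).hasDerivAt).deriv

theorem hasDerivAt_deriv_sq_mul (ha : ContDiff ℝ 2 a) (hu : ContDiff ℝ 2 u) (t : ℝ) :
    HasDerivAt (deriv (a ^ 2 * u))
      (2 * (deriv a t ^ 2 + a t * deriv (deriv a) t) * u t + 4 * a t * deriv a t * deriv u t
        + a t ^ 2 * deriv (deriv u) t) t := by
  have da := (ha.differentiable two_ne_zero t).hasDerivAt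
  have du := (hu.differentiable two_ne_zero t).hasDerivAt
  have dda := (ha.differentiable_deriv_two t).hasDerivAt
  have ddu := (hu.differentiable_deriv_two t).hasDerivAt
  rw [deriv_sq_mul (ha.differentiable two_ne_zero) (hu.differentiable two_ne_zero)]
  refine ((((da.const_mul 2).fun_mul dda).fun_mul du).fun_add
    ((da.fun_pow 2).fun_mul ddu)).congr_deriv ?_
  push_cast
  ring

theorem wronskian_sq_mul (ha : Differentiable ℝ a) (hu : Differentiable ℝ u)
    (hv : Differentiable ℝ v) (t : ℝ) :
    (a ^ 2 * u) t * deriv (a ^ 2 * v) t - deriv (a ^ 2 * u) t * (a ^ 2 * v) t =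
      -(a t ^ 4 * (deriv u t * v t - u t * deriv v t)) := by
  simp only [deriv_sq_mul ha hu, deriv_sq_mul ha hv, Pi.mul_apply, Pi.pow_apply]
  ring

theorem wronskian_deriv_sq_mul (ha : ContDiff ℝ 2 a) (hu : ContDiff ℝ 2 u) (hv : ContDiff ℝ 2 v)
    (t : ℝ) :
    deriv (deriv (a ^ 2 * u)) t * deriv (a ^ 2 * v) t
        - deriv (a ^ 2 * u) t * deriv (deriv (a ^ 2 * v)) t =
      a t ^ 4 * (deriv (deriv u) t * deriv v t - deriv u t * deriv (deriv v) t)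
        + 2 * a t ^ 3 * deriv a t * (deriv (deriv u) t * v t - u t * deriv (deriv v) t)
        + (6 * a t ^ 2 * deriv a t ^ 2 - 2 * a t ^ 3 * deriv (deriv a) t)
          * (deriv u t * v t - u t * deriv v t) := by
  rw [(hasDerivAt_deriv_sq_mul ha hu t).deriv, (hasDerivAt_deriv_sq_mul ha hv t).deriv,
    deriv_sq_mul (ha.differentiable two_ne_zero) (hu.differentiable two_ne_zero),
    deriv_sq_mul (ha.differentiable two_ne_zero) (hv.differentiable two_ne_zero)]
  ring

theorem hasDerivAt_wronskian (hu : ContDiff ℝ 2 u) (hv : ContDiff ℝ 2 v) (t : ℝ) :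
    HasDerivAt (fun s => deriv u s * v s - u s * deriv v s)
      (deriv (deriv u) t * v t - u t * deriv (deriv v) t) t := by
  have du := (hu.differentiable two_ne_zero t).hasDerivAt
  have dv := (hv.differentiable two_ne_zero t).hasDerivAt
  have ddu := (hu.differentiable_deriv_two t).hasDerivAt
  have ddv := (hv.differentiable_deriv_two t).hasDerivAt
  exact ((ddu.fun_mul dv).fun_sub (du.fun_mul ddv)).congr_deriv (by ring)

theorem deriv_cube_mul_deriv_mul_wronskian (ha : ContDiff ℝ 2 a) (hu : ContDiff ℝ 2 u)
    (hv : ContDiff ℝ 2 v) (t : ℝ) :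
    deriv (fun s => a s ^ 3 * deriv a s * (deriv u s * v s - u s * deriv v s)) t =
      (3 * a t ^ 2 * deriv a t ^ 2 + a t ^ 3 * deriv (deriv a) t)
          * (deriv u t * v t - u t * deriv v t)
        + a t ^ 3 * deriv a t * (deriv (deriv u) t * v t - u t * deriv (deriv v) t) := by
  have da := (ha.differentiable two_ne_zero t).hasDerivAt
  have dda := (ha.differentiable_deriv_two t).hasDerivAt
  rw [(((da.fun_pow 3).fun_mul dda).fun_mul (hasDerivAt_wronskian hu hv t)).deriv]
  push_cast
  ring

theorem wronskian_density_sq_mul (ha : ContDiff ℝ 2 a) (hu : ContDiff ℝ 2 u)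
    (hv : ContDiff ℝ 2 v) {t : ℝ} (ha0 : a t ≠ 0) :
    deriv (deriv a) t / a t
          * ((a ^ 2 * u) t * deriv (a ^ 2 * v) t - deriv (a ^ 2 * u) t * (a ^ 2 * v) t)
        - 1 / 4 * (deriv (deriv (a ^ 2 * u)) t * deriv (a ^ 2 * v) t
          - deriv (a ^ 2 * u) t * deriv (deriv (a ^ 2 * v)) t) =
      -(1 / 4) * (deriv (deriv u) t * deriv v t - deriv u t * deriv (deriv v) t) * a t ^ 4
        - 1 / 2 * deriv
          (fun s => a s ^ 3 * deriv a s * (deriv u s * v s - u s * deriv v s)) t := by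
  rw [wronskian_sq_mul (ha.differentiable two_ne_zero) (hu.differentiable two_ne_zero)
      (hv.differentiable two_ne_zero), wronskian_deriv_sq_mul ha hu hv,
    deriv_cube_mul_deriv_mul_wronskian ha hu hv]
  field_simp
  ring

end SqMul

/-- The lift `(a, aγ)` to the plane of a curve `γ` in an affine chart of the projective line. The
scale `a` is kept arbitrary; `γ' = a⁻²` is the normalization under which `[Γ, Γ'] = 1`. -/
def centroAffineLift (a γ : ℝ → ℝ) (t : ℝ) : ℝ × ℝ := (a t, a t * γ t)

section Lift

variable {a γ u v : ℝ → ℝ}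

theorem hasDerivAt_centroAffineLift {t : ℝ} (ha : DifferentiableAt ℝ a t)
    (hγ : HasDerivAt γ (a t ^ 2)⁻¹ t) :
    HasDerivAt (centroAffineLift a γ) (deriv a t, deriv a t * γ t + (a t)⁻¹) t := by
  refine (ha.hasDerivAt.prodMk (ha.hasDerivAt.fun_mul hγ)).congr_deriv ?_
  congr 2
  field_simp

theorem det2_centroAffineLift_deriv {t : ℝ} (ha : DifferentiableAt ℝ a t) (ha0 : a t ≠ 0)
    (hγ : HasDerivAt γ (a t ^ 2)⁻¹ t) :
    det2 (centroAffineLift a γ t) (deriv (centroAffineLift a γ) t) = 1 := by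
  rw [(hasDerivAt_centroAffineLift ha hγ).deriv]
  simp only [det2, centroAffineLift]
  field_simp
  ring

theorem hasDerivAt_deriv_centroAffineLift (ha : ContDiff ℝ 2 a)
    (hγ : ∀ t, HasDerivAt γ (a t ^ 2)⁻¹ t) {t : ℝ} (ha0 : a t ≠ 0) :
    HasDerivAt (deriv (centroAffineLift a γ))
      ((deriv (deriv a) t / a t) • centroAffineLift a γ t) t := by
  have da := ha.differentiable two_ne_zero
  have dda := (ha.differentiable_deriv_two t).hasDerivAt
  rw [funext fun s => (hasDerivAt_centroAffineLift (da s) (hγ s)).deriv]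
  refine (dda.prodMk ((dda.fun_mul (hγ t)).fun_add ((da t).hasDerivAt.fun_inv ha0))).congr_deriv ?_
  ext <;> simp only [centroAffineLift, Prod.smul_mk, smul_eq_mul] <;> field_simp
  ring

theorem centroAffineVariation_centroAffineLift (ha : Differentiable ℝ a)
    (hγ : ∀ t, HasDerivAt γ (a t ^ 2)⁻¹ t) (hu : Differentiable ℝ u) (t : ℝ) :
    centroAffineVariation (centroAffineLift a γ) (a ^ 2 * u) t =
      (-(1 / 2) * deriv u t * a t ^ 3,
        -(1 / 2) * deriv u t * a t ^ 2 * (a t * γ t) + u t * a t) := by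
  have a_sq_mul_inv : a t ^ 2 * (a t)⁻¹ = a t := by rw [sq, mul_self_mul_inv]
  rw [centroAffineVariation, deriv_sq_mul ha hu, (hasDerivAt_centroAffineLift (ha t) (hγ t)).deriv]
  simp only [centroAffineLift, Pi.mul_apply, Pi.pow_apply, Prod.smul_mk, Prod.mk_add_mk,
    smul_eq_mul]
  refine Prod.ext (by ring) ?_
  linear_combination u t * a_sq_mul_inv

theorem det2_deriv_add_mul_det2_centroAffineLift (ha : ContDiff ℝ 2 a)
    (hγ : ∀ t, HasDerivAt γ (a t ^ 2)⁻¹ t) (hu : ContDiff ℝ 2 u) (hv : ContDiff ℝ 2 v) {t : ℝ}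
    (ha0 : a t ≠ 0) :
    det2 (deriv (centroAffineVariation (centroAffineLift a γ) (a ^ 2 * u)) t)
          (deriv (centroAffineVariation (centroAffineLift a γ) (a ^ 2 * v)) t)
        + deriv (deriv a) t / a t
          * det2 (centroAffineVariation (centroAffineLift a γ) (a ^ 2 * u) t)
            (centroAffineVariation (centroAffineLift a γ) (a ^ 2 * v) t) =
      -(1 / 4) * (deriv (deriv u) t * deriv v t - deriv u t * deriv (deriv v) t) * a t ^ 4
        - 1 / 2 * deriv
          (fun s => a s ^ 3 * deriv a s * (deriv u s * v s - u s * deriv v s)) t := by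
  have da := ha.differentiable two_ne_zero t
  have hf : ContDiff ℝ 2 (a ^ 2 * u) := (ha.pow 2).mul hu
  have hg : ContDiff ℝ 2 (a ^ 2 * v) := (ha.pow 2).mul hv
  rw [det2_deriv_add_mul_det2_centroAffineVariation
      (hasDerivAt_centroAffineLift da (hγ t)).differentiableAt
      (hasDerivAt_deriv_centroAffineLift ha hγ ha0)
      (hf.differentiable two_ne_zero t) (hf.differentiable_deriv_two t)
      (hg.differentiable two_ne_zero t) (hg.differentiable_deriv_two t),
    det2_centroAffineLift_deriv da ha0 (hγ t), mul_one, wronskian_density_sq_mul ha hu hv ha0]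

end Lift

theorem Omega_is_quarter_KKS_general (γ : ℝ → ℝ) (hγ : ContDiff ℝ 3 γ)
    (hpos : ∀ t, 0 < deriv γ t)
    (u v : ℝ → ℝ) (hu : ContDiff ℝ 2 u) (hv : ContDiff ℝ 2 v)
    (Γ₁ Γ₂ p : ℝ → ℝ)
    (hΓ₁ : ∀ t, Γ₁ t = (√(deriv γ t))⁻¹)
    (hΓ₂ : ∀ t, Γ₂ t = (√(deriv γ t))⁻¹ * γ t)
    (hp : ∀ t, p t = deriv (deriv Γ₁) t / Γ₁ t)
    (U V : ℝ → ℝ × ℝ)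
    (hU : ∀ t, U t = (-(1 / 2) * deriv u t * Γ₁ t ^ 3,
        -(1 / 2) * deriv u t * Γ₁ t ^ 2 * Γ₂ t + u t * Γ₁ t))
    (hV : ∀ t, V t = (-(1 / 2) * deriv v t * Γ₁ t ^ 3,
        -(1 / 2) * deriv v t * Γ₁ t ^ 2 * Γ₂ t + v t * Γ₁ t)) :
    ∀ t, det2 (deriv U t) (deriv V t) + p t * det2 (U t) (V t) =
      -(1 / 4) * (deriv (deriv u) t * deriv v t - deriv u t * deriv (deriv v) t)
          / deriv γ t ^ 2
      - (1 / 2) * deriv (fun s =>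
          Γ₁ s ^ 3 * deriv Γ₁ s * (deriv u s * v s - u s * deriv v s)) t := by
  intro t
  have sqrt_ne_zero (s : ℝ) : √(deriv γ s) ≠ 0 := (Real.sqrt_pos.2 (hpos s)).ne'
  have ha0 : Γ₁ t ≠ 0 := hΓ₁ t ▸ inv_ne_zero (sqrt_ne_zero t)
  have ha : ContDiff ℝ 2 Γ₁ := by
    rw [funext hΓ₁]
    exact (hγ.deriv'.sqrt fun s => (hpos s).ne').inv sqrt_ne_zero
  have deriv_γ (s : ℝ) : deriv γ s = (Γ₁ s ^ 2)⁻¹ := by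
    rw [hΓ₁, inv_pow, inv_inv, Real.sq_sqrt (hpos s).le]
  have dγ (s : ℝ) : HasDerivAt γ (Γ₁ s ^ 2)⁻¹ s :=
    deriv_γ s ▸ (hγ.differentiable three_ne_zero s).hasDerivAt
  have variation_eq {w : ℝ → ℝ} (hw : ContDiff ℝ 2 w) (s : ℝ) :=
    centroAffineVariation_centroAffineLift (ha.differentiable two_ne_zero) dγ
      (hw.differentiable two_ne_zero) s
  have U_eq : U = centroAffineVariation (centroAffineLift Γ₁ γ) (Γ₁ ^ 2 * u) :=
    funext fun s => by rw [hU, variation_eq hu, hΓ₂, hΓ₁]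
  have V_eq : V = centroAffineVariation (centroAffineLift Γ₁ γ) (Γ₁ ^ 2 * v) :=
    funext fun s => by rw [hV, variation_eq hv, hΓ₂, hΓ₁]
  rw [U_eq, V_eq, hp, det2_deriv_add_mul_det2_centroAffineLift ha dγ hu hv ha0, deriv_γ,
    inv_pow, div_inv_eq_mul, ← pow_mul]

/-- In terms of the projective curve `γ` with lift `Γ = ((γ')^{-1/2}, (γ')^{-1/2}γ)`
and Hill potential `p = Γ₁''/Γ₁`, the density of the second pre-symplectic form
satisfies `[U', V'] + p[U, V] = −¼(u''v' − u'v'')/(γ')² − ½ d/dt(Γ₁³Γ₁'(u'v − uv'))`,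
i.e. `Ω = −¼Ω'` where `Ω'` is the Kirillov–Kostant–Souriau form. -/
theorem Omega_is_quarter_KKS (γ : ℝ → ℝ) (hγ : ContDiff ℝ (⊤ : ℕ∞) γ)
    (hpos : ∀ t, 0 < deriv γ t)
    (u v : ℝ → ℝ) (hu : ContDiff ℝ (⊤ : ℕ∞) u) (hv : ContDiff ℝ (⊤ : ℕ∞) v)
    (Γ₁ Γ₂ p : ℝ → ℝ)
    (hΓ₁ : ∀ t, Γ₁ t = (Real.sqrt (deriv γ t))⁻¹)
    (hΓ₂ : ∀ t, Γ₂ t = (Real.sqrt (deriv γ t))⁻¹ * γ t)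
    (hp : ∀ t, p t = deriv (deriv Γ₁) t / Γ₁ t)
    (U V : ℝ → ℝ × ℝ)
    (hU : ∀ t, U t = (-(1/2) * deriv u t * (Γ₁ t)^3,
        -(1/2) * deriv u t * (Γ₁ t)^2 * Γ₂ t + u t * Γ₁ t))
    (hV : ∀ t, V t = (-(1/2) * deriv v t * (Γ₁ t)^3,
        -(1/2) * deriv v t * (Γ₁ t)^2 * Γ₂ t + v t * Γ₁ t)) :
    ∀ t, det2 (deriv U t) (deriv V t) + p t * det2 (U t) (V t) =
      -(1/4) * (deriv (deriv u) t * deriv v t - deriv u t * deriv (deriv v) t)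
          / (deriv γ t)^2
      - (1/2) * deriv (fun s =>
          Γ₁ s ^ 3 * deriv Γ₁ s * (deriv u s * v s - u s * deriv v s)) t :=
  Omega_is_quarter_KKS_general γ (contDiff_infty.1 hγ 3) hpos u v (contDiff_infty.1 hu 2)
    (contDiff_infty.1 hv 2) Γ₁ Γ₂ p hΓ₁ hΓ₂ hp U V hU hV
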